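/- arXiv:2301.08777 — 3 statements merged into one kernel-verified Lean document; each statement's English description precedes it below -/
import Mathlib

section
/- Let G be a strong tournament of order at least 3. Then for every integer t ≥ 1, the diameter of ILTT^t(G) is at most max{diam(G), 3}. -/
open scoped Classical

noncomputable section

/-- A tournament: a finite directed graph where every pair of distinct nodes
is joined by exactly one arc. -/
structure Tournament where
  V : Type
  [fintypeV : Fintype V]
  [decEqV : DecidableEq V]
  arc : V → V → Prop
  irrefl : ∀ x, ¬ arc x x
  exactlyOne : ∀ x y, x ≠ y → (arc x y ↔ ¬ arc y x)

attribute [instance] Tournament.fintypeV Tournament.decEqV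

namespace Tournament

/-- The ILTT extension: vertices are `V ⊕ V` where `Sum.inl x` is the original
node `x` and `Sum.inr x` is its clone `x'`. -/
def ILTT (T : Tournament) : Tournament where
  V := T.V ⊕ T.V
  arc := fun u v =>
    match u, v with
    | Sum.inl x, Sum.inl y => T.arc x y
    | Sum.inl x, Sum.inr y => T.arc x y
    | Sum.inr x, Sum.inl y => T.arc x y ∨ x = y
    | Sum.inr x, Sum.inr y => T.arc x y
  irrefl := by rintro (x | x) h <;> exact T.irrefl x h
  exactlyOne := by
    rintro (x | x) (y | y) hxy
    · exact T.exactlyOne x y (fun h => hxy (by rw [h]))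
    · by_cases h : x = y
      · subst h; simp [T.irrefl x]
      · have := T.exactlyOne x y h
        simp only [not_or]
        constructor
        · intro ha; exact ⟨this.mp ha, fun h' => h h'.symm⟩
        · intro ha; exact this.mpr ha.1
    · by_cases h : x = y
      · subst h; simp [T.irrefl x]
      · have := T.exactlyOne x y h
        constructor
        · rintro (ha | ha)
          · exact this.mp ha
          · exact absurd ha h
        · intro ha; exact Or.inl (this.mpr ha)
    · exact T.exactlyOne x y (fun h => hxy (by rw [h]))

/-- The dual ILTT extension: identical to `ILTT` except the arcs between
clones are reversed. -/
def ILTTd (T : Tournament) : Tournament where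
  V := T.V ⊕ T.V
  arc := fun u v =>
    match u, v with
    | Sum.inl x, Sum.inl y => T.arc x y
    | Sum.inl x, Sum.inr y => T.arc x y
    | Sum.inr x, Sum.inl y => T.arc x y ∨ x = y
    | Sum.inr x, Sum.inr y => T.arc y x
  irrefl := by rintro (x | x) h <;> exact T.irrefl x h
  exactlyOne := by
    rintro (x | x) (y | y) hxy
    · exact T.exactlyOne x y (fun h => hxy (by rw [h]))
    · by_cases h : x = y
      · subst h; simp [T.irrefl x]
      · have := T.exactlyOne x y h
        simp only [not_or]
        constructor
        · intro ha; exact ⟨this.mp ha, fun h' => h h'.symm⟩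
        · intro ha; exact this.mpr ha.1
    · by_cases h : x = y
      · subst h; simp [T.irrefl x]
      · have := T.exactlyOne x y h
        constructor
        · rintro (ha | ha)
          · exact this.mp ha
          · exact absurd ha h
        · intro ha; exact Or.inl (this.mpr ha)
    · exact T.exactlyOne y x (fun h => hxy (by rw [h]))

/-- A tournament is strong if, for every ordered pair of nodes, there is a
directed path from the first to the second. -/
def Strong (T : Tournament) : Prop := ∀ u v : T.V, Relation.ReflTransGen T.arc u v

/-- `HasWalk T u v n` : there is a directed walk of length `n` from `u` to `v`. -/
def HasWalk (T : Tournament) (u v : T.V) (n : ℕ) : Prop :=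
  ∃ f : Fin (n + 1) → T.V, f 0 = u ∧ f (Fin.last n) = v ∧
    ∀ i : Fin n, T.arc (f i.castSucc) (f i.succ)

/-- The distance from `u` to `v`: the length of a shortest directed path. -/
def dist (T : Tournament) (u v : T.V) : ℕ := sInf {n | HasWalk T u v n}

/-- The diameter: the maximum distance over ordered pairs of distinct nodes. -/
def diam (T : Tournament) : ℕ :=
  (Finset.univ.filter (fun p : T.V × T.V => p.1 ≠ p.2)).sup
    (fun p => T.dist p.1 p.2)

/-- The Wiener index: the sum of distances over ordered pairs of distinct nodes. -/
def wiener (T : Tournament) : ℕ :=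
  ∑ p ∈ Finset.univ.filter (fun p : T.V × T.V => p.1 ≠ p.2), T.dist p.1 p.2

/-- The average distance `L(T) = W(T)/(m(m-1))` where `m` is the order. -/
def avgDist (T : Tournament) : ℝ :=
  (T.wiener : ℝ) / ((Fintype.card T.V : ℝ) * ((Fintype.card T.V : ℝ) - 1))

/-- `J` is a subtournament of `K`. -/
def IsSubtournament (J K : Tournament) : Prop :=
  ∃ f : J.V → K.V, Function.Injective f ∧ ∀ u v : J.V, J.arc u v ↔ K.arc (f u) (f v)

/-- The linear order on `t` nodes. -/
def linearTournament (t : ℕ) : Tournament where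
  V := Fin t
  arc := fun i j => i < j
  irrefl := fun i => lt_irrefl i
  exactlyOne := fun i j h => by
    rw [not_lt]
    exact ⟨le_of_lt, fun hle => hle.lt_of_ne h⟩

/-- A tournament is Hamiltonian if it has a directed cycle through all nodes. -/
def IsHamiltonian (T : Tournament) : Prop :=
  ∃ f : ZMod (Fintype.card T.V) ≃ T.V, ∀ i, T.arc (f i) (f (i + 1))

/-- `S` is an in-dominating set. -/
def InDom (T : Tournament) (S : Finset T.V) : Prop :=
  ∀ u, u ∉ S → ∃ v ∈ S, T.arc u v

/-- `S` is an out-dominating set. -/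
def OutDom (T : Tournament) (S : Finset T.V) : Prop :=
  ∀ u, u ∉ S → ∃ v ∈ S, T.arc v u

/-- The in-domination number. -/
def inDomNum (T : Tournament) : ℕ := sInf {n | ∃ S : Finset T.V, T.InDom S ∧ S.card = n}

/-- The out-domination number. -/
def outDomNum (T : Tournament) : ℕ := sInf {n | ∃ S : Finset T.V, T.OutDom S ∧ S.card = n}

end Tournament

open Tournament

namespace Tournament

theorem HasWalk.refl (T : Tournament) (u : T.V) : T.HasWalk u u 0 :=
  ⟨fun _ => u, rfl, rfl, fun i => i.elim0⟩

theorem HasWalk.eq_of_zero {T : Tournament} {u v : T.V} (h : T.HasWalk u v 0) : u = v := by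
  obtain ⟨f, hu, hv, -⟩ := h
  exact hu.symm.trans hv

theorem HasWalk.cons {T : Tournament} {u w v : T.V} {n : ℕ} (huw : T.arc u w)
    (h : T.HasWalk w v n) : T.HasWalk u v (n + 1) := by
  obtain ⟨f, rfl, rfl, hf⟩ := h
  refine ⟨Fin.cons u f, rfl, ?_, fun i => ?_⟩
  · rw [← Fin.succ_last, Fin.cons_succ]
  · induction i using Fin.cases with
    | zero => simpa using huw
    | succ i => simpa [← Fin.succ_castSucc] using hf i

theorem exists_hasWalk_of_reflTransGen {T : Tournament} {u v : T.V}
    (h : Relation.ReflTransGen T.arc u v) : ∃ n, T.HasWalk u v n := by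
  induction h using Relation.ReflTransGen.head_induction_on with
  | refl => exact ⟨0, HasWalk.refl T v⟩
  | head huw _ ih =>
    obtain ⟨n, hn⟩ := ih
    exact ⟨n + 1, hn.cons huw⟩

theorem hasWalk_dist {T : Tournament} (hT : T.Strong) (u v : T.V) :
    T.HasWalk u v (T.dist u v) :=
  Nat.sInf_mem (s := {n | T.HasWalk u v n}) (exists_hasWalk_of_reflTransGen (hT u v))

theorem dist_le_diam (T : Tournament) {u v : T.V} (huv : u ≠ v) : T.dist u v ≤ T.diam :=
  Finset.le_sup (f := fun p : T.V × T.V => T.dist p.1 p.2)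
    (Finset.mem_filter.mpr ⟨Finset.mem_univ (u, v), huv⟩)

/-- In a nontrivial strong tournament every node lies on a directed 3-cycle. -/
theorem Strong.hasWalk_self_three {T : Tournament} (hT : T.Strong)
    (hcard : 1 < Fintype.card T.V) (x : T.V) : T.HasWalk x x 3 := by
  obtain ⟨y, hyx⟩ := Fintype.exists_ne_of_one_lt_card hcard x
  obtain ⟨a, hxa⟩ : ∃ a, T.arc x a := by
    rcases (hT x y).cases_head with h | ⟨a, ha, -⟩
    · exact absurd h.symm hyx
    · exact ⟨a, ha⟩
  by_contra hcycle
  have hout : ∀ b, Relation.ReflTransGen T.arc a b → T.arc x b := by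
    intro b hab
    induction hab with
    | refl => exact hxa
    | @tail b c _ hbc hxb =>
      have hxb_ne : x ≠ b := fun h => T.irrefl b (h ▸ hxb)
      by_cases hxc : x = c
      · subst hxc
        exact absurd hbc ((T.exactlyOne x b hxb_ne).mp hxb)
      · refine (T.exactlyOne x c hxc).mpr fun hcx => hcycle ?_
        exact (((HasWalk.refl T x).cons hcx).cons hbc).cons hxb
  exact T.irrefl x (hout x (hT a x))

/-- The node of `T` underlying a node of `T.ILTT`: clones are sent to their originals. -/
def proj (T : Tournament) : T.ILTT.V → T.V := Sum.elim id id

theorem arc_ILTT_of_arc_proj {T : Tournament} {a b : T.ILTT.V}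
    (h : T.arc (T.proj a) (T.proj b)) : T.ILTT.arc a b := by
  rcases a with a | a <;> rcases b with b | b
  · exact h
  · exact h
  · exact Or.inl h
  · exact h

theorem HasWalk.lift_ILTT {T : Tournament} {a b : T.ILTT.V} {n : ℕ} (hn : 1 ≤ n)
    (h : T.HasWalk (T.proj a) (T.proj b) n) : T.ILTT.HasWalk a b n := by
  obtain ⟨f, ha, hb, hf⟩ := h
  let g : Fin (n + 1) → T.ILTT.V := fun i =>
    if i = 0 then a else if i = Fin.last n then b else Sum.inl (f i)
  have hg : ∀ i, T.proj (g i) = f i := by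
    intro i
    by_cases h0 : i = 0
    · simp [g, h0, ha]
    · by_cases hl : i = Fin.last n
      · subst hl
        simp [g, h0, hb]
      · simp only [g, h0, hl, if_false]
        rfl
  have hlast : Fin.last n ≠ 0 := by
    rw [Ne, Fin.ext_iff, Fin.val_last, Fin.val_zero]
    omega
  refine ⟨g, by simp [g], by simp [g, hlast], fun i => arc_ILTT_of_arc_proj ?_⟩
  rw [hg, hg]
  exact hf i

/-- Any two nodes, possibly equal, are joined by a nontrivial walk of length at most `m`. -/
def WalkBounded (T : Tournament) (m : ℕ) : Prop :=
  ∀ u v : T.V, ∃ n, 1 ≤ n ∧ n ≤ m ∧ T.HasWalk u v n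

theorem Strong.walkBounded {T : Tournament} (hT : T.Strong) (hcard : 1 < Fintype.card T.V) :
    T.WalkBounded (max T.diam 3) := by
  intro u v
  by_cases huv : u = v
  · subst huv
    exact ⟨3, by norm_num, le_max_right _ _, hT.hasWalk_self_three hcard u⟩
  · refine ⟨T.dist u v, Nat.one_le_iff_ne_zero.mpr fun h0 => huv ?_,
      (T.dist_le_diam huv).trans (le_max_left _ _), hasWalk_dist hT u v⟩
    have h := hasWalk_dist hT u v
    rw [h0] at h
    exact h.eq_of_zero

theorem WalkBounded.ILTT {T : Tournament} {m : ℕ} (h : T.WalkBounded m) :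
    T.ILTT.WalkBounded m := fun a b =>
  let ⟨n, hn, hnm, hw⟩ := h (T.proj a) (T.proj b)
  ⟨n, hn, hnm, hw.lift_ILTT hn⟩

theorem WalkBounded.iterate_ILTT {T : Tournament} {m : ℕ} (h : T.WalkBounded m) (t : ℕ) :
    (Tournament.ILTT^[t] T).WalkBounded m := by
  induction t with
  | zero => exact h
  | succ t ih =>
    rw [Function.iterate_succ_apply']
    exact ih.ILTT

theorem WalkBounded.diam_le {T : Tournament} {m : ℕ} (h : T.WalkBounded m) : T.diam ≤ m :=
  Finset.sup_le fun p _ =>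
    let ⟨_, _, hnm, hw⟩ := h p.1 p.2
    (Nat.sInf_le hw).trans hnm

end Tournament

/-- For a strong tournament `G` of order at least 3 and `t ≥ 1`,
`diam(ILTT^t(G)) ≤ max (diam G) 3`. -/
theorem stmt4 (G : Tournament) (hcard : 3 ≤ Fintype.card G.V) (hG : G.Strong) :
    ∀ t : ℕ, 1 ≤ t → (Tournament.ILTT^[t] G).diam ≤ max G.diam 3 :=
  fun t _ => ((hG.walkBounded (by omega)).iterate_ILTT t).diam_le
end
end

section
/- Let G be a strong tournament on n ≥ 3 nodes, and let α be the number of arcs of G that do not lie on any directed 3-cycle of G. Then for every integer t ≥ 1, the Wiener index of ILTT_d^t(G) satisfies W(ILTT_d^t(G)) = 12·C(2^{t−1}n, 2) + α + 3·2^{t−1}n, where C(m,2) = m(m−1)/2. -/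
open scoped Classical

noncomputable section

namespace Tournament

variable (T : Tournament)

theorem arc_asymm {T : Tournament} {x y : T.V} (h : T.arc x y) : ¬ T.arc y x := by
  by_cases hxy : x = y
  · subst hxy; exact T.irrefl x
  · exact (T.exactlyOne x y hxy).1 h

theorem arc_of_not_arc {T : Tournament} {x y : T.V} (hxy : x ≠ y) (h : ¬ T.arc x y) :
    T.arc y x :=
  (T.exactlyOne y x hxy.symm).2 h

theorem hasWalk_zero {u v : T.V} : T.HasWalk u v 0 ↔ u = v := by
  constructor
  · rintro ⟨f, rfl, rfl, -⟩
    rfl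
  · rintro rfl
    exact ⟨fun _ => u, rfl, rfl, fun i => i.elim0⟩

theorem hasWalk_succ {u v : T.V} {n : ℕ} :
    T.HasWalk u v (n + 1) ↔ ∃ w, T.arc u w ∧ T.HasWalk w v n := by
  constructor
  · rintro ⟨f, rfl, rfl, hf⟩
    exact ⟨f 1, hf 0, fun i => f i.succ, rfl, rfl, fun i => hf i.succ⟩
  · rintro ⟨w, huw, f, rfl, rfl, hf⟩
    refine ⟨Fin.cons u f, rfl, ?_, fun i => ?_⟩
    · rw [← Fin.succ_last, Fin.cons_succ]
    · refine Fin.cases ?_ (fun j => ?_) i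
      · simpa using huw
      · rw [← Fin.succ_castSucc, Fin.cons_succ, Fin.cons_succ]
        exact hf j

theorem hasWalk_one {u v : T.V} : T.HasWalk u v 1 ↔ T.arc u v := by
  simp [hasWalk_succ, hasWalk_zero]

theorem hasWalk_two {u v : T.V} : T.HasWalk u v 2 ↔ ∃ w, T.arc u w ∧ T.arc w v := by
  rw [hasWalk_succ]
  simp only [hasWalk_one]

theorem dist_eq_of_hasWalk {u v : T.V} {n : ℕ} (h : T.HasWalk u v n)
    (hmin : ∀ m < n, ¬ T.HasWalk u v m) : T.dist u v = n :=
  le_antisymm (Nat.sInf_le h)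
    (le_csInf ⟨n, h⟩ fun m hm => not_lt.1 fun hlt => hmin m hlt hm)

theorem dist_eq_one {u v : T.V} (h : T.arc u v) : T.dist u v = 1 := by
  refine T.dist_eq_of_hasWalk (T.hasWalk_one.2 h) fun m hm => ?_
  interval_cases m
  rw [hasWalk_zero]
  rintro rfl
  exact T.irrefl u h

theorem dist_eq_two {u v : T.V} (h : T.arc v u) (hc : ∃ c, T.arc u c ∧ T.arc c v) :
    T.dist u v = 2 := by
  refine T.dist_eq_of_hasWalk (T.hasWalk_two.2 hc) fun m hm => ?_
  interval_cases m
  · rw [hasWalk_zero]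
    rintro rfl
    exact T.irrefl u h
  · rw [hasWalk_one]
    exact arc_asymm h

theorem dist_eq_three {u v : T.V} (h : T.arc v u) (hc : ¬ ∃ c, T.arc u c ∧ T.arc c v)
    (h3 : T.HasWalk u v 3) : T.dist u v = 3 := by
  refine T.dist_eq_of_hasWalk h3 fun m hm => ?_
  interval_cases m
  · rw [hasWalk_zero]
    rintro rfl
    exact T.irrefl u h
  · rw [hasWalk_one]
    exact arc_asymm h
  · rwa [hasWalk_two]

/-- The arcs lying on no directed 3-cycle. -/
def acyclicArcs : Finset (T.V × T.V) :=
  Finset.univ.filter fun p => T.arc p.1 p.2 ∧ ¬ ∃ c, T.arc p.2 c ∧ T.arc c p.1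

/-- The set of all arcs. -/
def arcs : Finset (T.V × T.V) := Finset.univ.filter fun p => T.arc p.1 p.2

theorem sum_ne_eq_sum_arcs (f : T.V × T.V → ℕ) :
    ∑ p ∈ Finset.univ.filter (fun p : T.V × T.V => p.1 ≠ p.2), f p =
      ∑ p ∈ T.arcs, (f p + f p.swap) := by
  rw [Finset.sum_add_distrib, ← Finset.sum_filter_add_sum_filter_not _
    (fun p : T.V × T.V => T.arc p.1 p.2)]
  congr 1
  · refine Finset.sum_congr (Finset.ext fun p => ?_) fun _ _ => rfl
    simp only [arcs, Finset.mem_filter, Finset.mem_univ, true_and, and_iff_right_iff_imp]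
    intro h he
    exact T.irrefl p.1 (he ▸ h)
  · refine Finset.sum_nbij' Prod.swap Prod.swap ?_ ?_ ?_ ?_ ?_
    · rintro ⟨x, y⟩ h
      simp only [arcs, Finset.mem_filter, Finset.mem_univ, true_and] at h ⊢
      exact arc_of_not_arc h.1 h.2
    · rintro ⟨x, y⟩ h
      simp only [arcs, Finset.mem_filter, Finset.mem_univ, true_and] at h ⊢
      refine ⟨fun he => ?_, arc_asymm h⟩
      dsimp at he
      subst he
      exact T.irrefl _ h
    all_goals simp

theorem card_arcs : T.arcs.card = (Fintype.card T.V).choose 2 := by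
  have h := T.sum_ne_eq_sum_arcs fun _ => 1
  have h' : (Finset.univ.filter fun p : T.V × T.V => p.1 ≠ p.2).card =
      Fintype.card T.V * (Fintype.card T.V - 1) := by
    have := Finset.offDiag_card (Finset.univ : Finset T.V)
    rw [Finset.card_univ, ← Nat.mul_sub_one] at this
    rw [← this]
    congr 1
    ext p
    simp
  rw [← Finset.card_eq_sum_ones, h', Finset.sum_const, smul_eq_mul] at h
  rw [Nat.choose_two_right]
  omega

/-- When the tail of every arc off all directed 3-cycles is reachable from its head in three
steps, the Wiener index is determined by the order and the number of such arcs. -/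
theorem wiener_eq (h : ∀ x y, (x, y) ∈ T.acyclicArcs → T.HasWalk y x 3) :
    T.wiener = 3 * (Fintype.card T.V).choose 2 + T.acyclicArcs.card := by
  have hsum : ∀ p ∈ T.arcs, T.dist p.1 p.2 + T.dist p.swap.1 p.swap.2 =
      3 + if ¬ ∃ c, T.arc p.2 c ∧ T.arc c p.1 then 1 else 0 := by
    rintro ⟨x, y⟩ hp
    have hp : T.arc x y := by simpa [arcs] using hp
    simp only [Prod.swap_prod_mk]
    rw [T.dist_eq_one hp]
    split_ifs with hc
    · rw [T.dist_eq_two hp hc]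
    · rw [T.dist_eq_three hp hc
        (h x y (Finset.mem_filter.2 ⟨Finset.mem_univ _, hp, hc⟩))]
  rw [wiener, T.sum_ne_eq_sum_arcs fun p => T.dist p.1 p.2, Finset.sum_congr rfl hsum,
    Finset.sum_add_distrib, ← Finset.card_filter, Finset.sum_const, card_arcs, smul_eq_mul,
    mul_comm, arcs, Finset.filter_filter, acyclicArcs]

/-- Arcs off all directed 3-cycles in the dual extension are exactly those of the base. -/
theorem mem_acyclicArcs_ILTTd (hout : ∀ x, ∃ y, T.arc x y) (u v : T.V ⊕ T.V) :
    ((u, v) : T.ILTTd.V × T.ILTTd.V) ∈ T.ILTTd.acyclicArcs ↔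
      ∃ x y, (x, y) ∈ T.acyclicArcs ∧ u = Sum.inl x ∧ v = Sum.inl y := by
  simp only [acyclicArcs, Finset.mem_filter, Finset.mem_univ, true_and]
  constructor
  · rintro ⟨harc, hc⟩
    rcases u with x | x <;> rcases v with y | y
    · exact ⟨x, y, ⟨harc, fun ⟨c, h₁, h₂⟩ => hc ⟨Sum.inl c, h₁, h₂⟩⟩, rfl, rfl⟩
    · exact absurd ⟨Sum.inr x, harc, Or.inr rfl⟩ hc
    · refine absurd ?_ hc
      obtain ⟨c, hyc⟩ := hout y
      rcases harc with hxy | rfl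
      · by_cases hcx : T.arc c x
        · exact ⟨Sum.inl c, hyc, hcx⟩
        · have hne : c ≠ x := by
            rintro rfl
            exact arc_asymm hxy hyc
          exact ⟨Sum.inr c, hyc, arc_of_not_arc (T := T) hne hcx⟩
      · exact ⟨Sum.inr c, hyc, hyc⟩
    · exact absurd ⟨Sum.inl y, Or.inr rfl, harc⟩ hc
  · rintro ⟨x, y, ⟨hxy, hc⟩, rfl, rfl⟩
    refine ⟨hxy, ?_⟩
    rintro ⟨c | c, h₁, h₂⟩
    · exact hc ⟨c, h₁, h₂⟩
    · rcases h₂ with h₂ | rfl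
      · exact hc ⟨c, h₁, h₂⟩
      · exact arc_asymm hxy h₁

theorem card_acyclicArcs_ILTTd (hout : ∀ x, ∃ y, T.arc x y) :
    T.ILTTd.acyclicArcs.card = T.acyclicArcs.card := by
  symm
  refine Finset.card_bij (fun p _ => ((Sum.inl p.1, Sum.inl p.2) : T.ILTTd.V × T.ILTTd.V))
    ?_ ?_ ?_
  · rintro ⟨x, y⟩ h
    exact (T.mem_acyclicArcs_ILTTd hout _ _).2 ⟨x, y, h, rfl, rfl⟩
  · rintro ⟨x, y⟩ - ⟨z, w⟩ - h
    obtain ⟨hx, hy⟩ := Prod.mk.inj h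
    exact Prod.ext (Sum.inl_injective hx) (Sum.inl_injective hy)
  · rintro ⟨u, v⟩ h
    obtain ⟨x, y, hxy, rfl, rfl⟩ := (T.mem_acyclicArcs_ILTTd hout u v).1 h
    exact ⟨(x, y), hxy, rfl⟩

theorem card_ILTTd : Fintype.card T.ILTTd.V = 2 * Fintype.card T.V := by
  rw [two_mul]
  exact Fintype.card_sum

theorem exists_arc_ILTTd (hout : ∀ x, ∃ y, T.arc x y) (u : T.ILTTd.V) :
    ∃ v, T.ILTTd.arc u v := by
  rcases u with x | x
  · obtain ⟨y, hy⟩ := hout x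
    exact ⟨Sum.inl y, hy⟩
  · exact ⟨Sum.inl x, Or.inr rfl⟩

theorem wiener_ILTTd (hout : ∀ x, ∃ y, T.arc x y) :
    T.ILTTd.wiener = 3 * (2 * Fintype.card T.V).choose 2 + T.acyclicArcs.card := by
  rw [wiener_eq, card_ILTTd, T.card_acyclicArcs_ILTTd hout]
  intro u v h
  obtain ⟨x, y, hxy, rfl, rfl⟩ := (T.mem_acyclicArcs_ILTTd hout u v).1 h
  simp only [acyclicArcs, Finset.mem_filter, Finset.mem_univ, true_and] at hxy
  obtain ⟨c, hyc⟩ := hout y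
  have hxc : T.arc x c := by
    refine arc_of_not_arc (x := c) ?_ fun hcx => hxy.2 ⟨c, hyc, hcx⟩
    rintro rfl
    exact arc_asymm hxy.1 hyc
  exact (hasWalk_succ _).2 ⟨Sum.inr c, hyc, (hasWalk_two _).2 ⟨Sum.inr x, hxc, Or.inr rfl⟩⟩

theorem iterate_ILTTd_invariants (hout : ∀ x, ∃ y, T.arc x y) (k : ℕ) :
    (∀ x, ∃ y, (ILTTd^[k] T).arc x y) ∧
      Fintype.card (ILTTd^[k] T).V = 2 ^ k * Fintype.card T.V ∧
      (ILTTd^[k] T).acyclicArcs.card = T.acyclicArcs.card := by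
  induction k with
  | zero => exact ⟨hout, by rw [pow_zero, one_mul]; rfl, rfl⟩
  | succ k ih =>
    obtain ⟨h₁, h₂, h₃⟩ := ih
    rw [Function.iterate_succ_apply']
    exact ⟨exists_arc_ILTTd _ h₁, by rw [card_ILTTd, h₂, pow_succ']; ring,
      by rw [card_acyclicArcs_ILTTd _ h₁, h₃]⟩

theorem Strong.exists_arc {T : Tournament} (hT : T.Strong) (hcard : 1 < Fintype.card T.V)
    (x : T.V) : ∃ y, T.arc x y := by
  obtain ⟨z, hz⟩ := Fintype.exists_ne_of_one_lt_card hcard x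
  rcases Relation.ReflTransGen.cases_head (hT x z) with h | ⟨y, hy, -⟩
  · exact absurd h.symm hz
  · exact ⟨y, hy⟩

end Tournament

theorem three_mul_choose_two_mul (m : ℕ) :
    3 * (2 * m).choose 2 = 12 * m.choose 2 + 3 * m := by
  have h : (2 * m).choose 2 = 4 * m.choose 2 + m := by
    induction m with
    | zero => rfl
    | succ m ih =>
      have h₁ : 2 * (m + 1) = 2 * m + 1 + 1 := by ring
      simp only [h₁, Nat.choose_succ_succ' _ 1, Nat.choose_one_right, Nat.reduceAdd, ih]
      ring
  rw [h]
  ring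

open Tournament

/-- For a strong tournament `G` on `n ≥ 3` nodes, with `α` the
number of arcs of `G` not on any directed 3-cycle, for every `t ≥ 1`,
`W(ILTT_d^t(G)) = 12·C(2^(t-1)·n, 2) + α + 3·2^(t-1)·n`. -/
theorem stmt9 (G : Tournament) (n : ℕ) (hn : Fintype.card G.V = n)
    (hcard : 3 ≤ n) (hG : G.Strong) (a : ℕ)
    (ha : a = (Finset.univ.filter (fun p : G.V × G.V =>
        G.arc p.1 p.2 ∧ ¬ ∃ c : G.V, G.arc p.2 c ∧ G.arc c p.1)).card) :
    ∀ t : ℕ, 1 ≤ t → (Tournament.ILTTd^[t] G).wiener =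
      12 * Nat.choose (2 ^ (t - 1) * n) 2 + a + 3 * (2 ^ (t - 1) * n) := by
  intro t ht
  obtain ⟨k, rfl⟩ := Nat.exists_eq_add_of_le' ht
  have hout := hG.exists_arc (by omega)
  obtain ⟨h₁, h₂, h₃⟩ := G.iterate_ILTTd_invariants hout k
  rw [Function.iterate_succ_apply', wiener_ILTTd _ h₁, h₂, h₃, hn, three_mul_choose_two_mul, ha,
    Nat.add_sub_cancel, acyclicArcs]
  ring
end
end

section
/- Let G be a nonempty tournament. Then for every integer t ≥ 1, the linear order on t nodes is a subtournament of ILTT^t(G), and also a subtournament of ILTT_d^t(G). -/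
open scoped Classical

noncomputable section

open Tournament

namespace Tournament

theorem not_arc_of_arc (T : Tournament) {x y : T.V} (h : T.arc x y) : ¬ T.arc y x := by
  by_cases hxy : x = y
  · subst hxy
    exact T.irrefl x
  · exact (T.exactlyOne x y hxy).mp h

/-- A sequence whose arcs all point forward embeds the linear order. -/
theorem linearTournament_isSubtournament_of_forward {T : Tournament} {n : ℕ} (f : Fin n → T.V)
    (hf : ∀ i j, i < j → T.arc (f i) (f j)) : (linearTournament n).IsSubtournament T := by
  refine ⟨f, fun i j hij => ?_, fun i j => ⟨hf i j, fun h => ?_⟩⟩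
  · rcases lt_trichotomy (α := Fin n) i j with h | h | h
    · exact absurd (hij ▸ hf i j h) (T.irrefl _)
    · exact h
    · exact absurd (hij ▸ hf j i h) (T.irrefl _)
  · rcases lt_trichotomy (α := Fin n) i j with h' | h' | h'
    · exact h'
    · exact absurd (h' ▸ h) (T.irrefl _)
    · exact absurd h (T.not_arc_of_arc (hf j i h'))

theorem linearTournament_isSubtournament_of_le {T : Tournament} {m n : ℕ} (hmn : m ≤ n)
    (h : (linearTournament n).IsSubtournament T) : (linearTournament m).IsSubtournament T := by
  obtain ⟨f, -, hf⟩ := h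
  exact linearTournament_isSubtournament_of_forward (fun i => f (Fin.castLE hmn i))
    fun i j hij => (hf _ _).mp (show Fin.castLE hmn i < Fin.castLE hmn j from hij)

theorem linearTournament_one_isSubtournament (T : Tournament) [Nonempty T.V] :
    (linearTournament 1).IsSubtournament T :=
  linearTournament_isSubtournament_of_forward (fun _ => Classical.arbitrary T.V)
    fun i j hij => absurd hij (by simp [Subsingleton.elim i j])

/-- If `S` contains a copy of `T` together with, for each node of `T`, a clone dominating that
node and all its out-neighbours, then cloning the source of a linear order in `T` gives a longer
linear order in `S`. -/
theorem linearTournament_isSubtournament_succ {S T : Tournament} {n : ℕ} (orig clone : T.V → S.V)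
    (horig : ∀ x y, T.arc x y → S.arc (orig x) (orig y))
    (hclone : ∀ x y, T.arc x y ∨ x = y → S.arc (clone x) (orig y))
    (h : (linearTournament (n + 1)).IsSubtournament T) :
    (linearTournament (n + 2)).IsSubtournament S := by
  obtain ⟨f, -, hf⟩ := h
  change Fin (n + 1) → T.V at f
  refine linearTournament_isSubtournament_of_forward
    (Fin.cons (clone (f 0)) fun i => orig (f i) : Fin (n + 2) → S.V) fun i j hij => ?_
  cases j using Fin.cases with
  | zero => exact absurd hij (Fin.not_lt_zero i)
  | succ j =>
    cases i using Fin.cases with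
    | zero =>
      refine hclone _ _ ?_
      rcases (Fin.zero_le j).eq_or_lt with h0 | h0
      · exact Or.inr (congrArg f h0)
      · exact Or.inl ((hf _ _).mp h0)
    | succ i => exact horig _ _ ((hf _ _).mp (Fin.succ_lt_succ_iff.mp hij))

theorem linearTournament_isSubtournament_iterate_ILTT (G : Tournament) [Nonempty G.V] (t : ℕ) :
    (linearTournament (t + 1)).IsSubtournament (ILTT^[t] G) := by
  induction t with
  | zero => exact G.linearTournament_one_isSubtournament
  | succ t ih =>
    rw [Function.iterate_succ_apply']
    exact linearTournament_isSubtournament_succ Sum.inl Sum.inr (fun _ _ h => h)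
      (fun _ _ h => h) ih

theorem linearTournament_isSubtournament_iterate_ILTTd (G : Tournament) [Nonempty G.V] (t : ℕ) :
    (linearTournament (t + 1)).IsSubtournament (ILTTd^[t] G) := by
  induction t with
  | zero => exact G.linearTournament_one_isSubtournament
  | succ t ih =>
    rw [Function.iterate_succ_apply']
    exact linearTournament_isSubtournament_succ Sum.inl Sum.inr (fun _ _ h => h)
      (fun _ _ h => h) ih

end Tournament

/-- For a nonempty tournament `G` and every `t ≥ 1`, the linear
order on `t` nodes is a subtournament of both `ILTT^t(G)` and `ILTT_d^t(G)`. -/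
theorem stmt11 (G : Tournament) (hne : Nonempty G.V) :
    ∀ t : ℕ, 1 ≤ t →
      (linearTournament t).IsSubtournament (Tournament.ILTT^[t] G) ∧
      (linearTournament t).IsSubtournament (Tournament.ILTTd^[t] G) := by
  exact fun t _ =>
    ⟨linearTournament_isSubtournament_of_le t.le_succ
      (linearTournament_isSubtournament_iterate_ILTT G t),
    linearTournament_isSubtournament_of_le t.le_succ
      (linearTournament_isSubtournament_iterate_ILTTd G t)⟩
end
end
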